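/- arXiv:2409.11346 — 7 statements merged into one kernel-verified Lean document; each statement's English description precedes it below -/
import Mathlib

section
/- Lifted optimality inequality for formulation (nPCA1): let (x, y, z) satisfy the constraints of (nPCA1), namely x : I × J × {1,…,H} → {0,1}, y : J × {1,…,H} → {0,1}, z : {1,…,H} → ℝ≥0 with Σ_{j} y_j^h = p^h, Σ_{j} x_{ij}^h = 1, x_{ij}^h ≤ y_j^h, Σ_{j} d_{ij} x_{ij}^h ≤ z^h and y_j^{h-1} ≤ y_j^h, and let h ∈ {1,…,H} and LB^h ≥ 0 be such that z^h ≥ LB^h. Then for every customer i ∈ I it holds that z^h ≥ Σ_{j∈J} max{LB^h, d_{ij}} x_{ij}^h. -/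
/-!
A binary vector whose entries sum to one is a standard basis vector `Pi.single k 1`. Weighting by
such a vector is evaluation at `k`, hence commutes with every function of the costs; for
`t ↦ max LB t` this identifies the left-hand side of the lifted inequality with
`max LB (∑ j, d i j * x i j h)`.
-/

section BinaryWeights

variable {J R : Type*} [Fintype J] {w : J → R}

theorem exists_eq_single_one_of_sum_eq_one [DecidableEq J] [AddCommMonoidWithOne R] [CharZero R]
    (hbinary : ∀ j, w j = 0 ∨ w j = 1) (hsum : ∑ j, w j = 1) : ∃ k, w = Pi.single k 1 := by
  classical
  have hindicator (j : J) : w j = if w j = 1 then 1 else 0 := by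
    rcases hbinary j with hj | hj <;> simp [hj]
  have hcard : ({j | w j = 1} : Finset J).card = 1 := by
    rw [← Nat.cast_eq_one (R := R), ← Finset.sum_boole]
    exact (Finset.sum_congr rfl fun j _ ↦ (hindicator j).symm).trans hsum
  obtain ⟨k, hk⟩ := Finset.card_eq_one.mp hcard
  have hsupport (j : J) : w j = 1 ↔ j = k := by simpa using Finset.ext_iff.mp hk j
  exact ⟨k, funext fun j ↦ by rw [hindicator, Pi.single_apply]; simp only [hsupport]⟩

variable [NonAssocSemiring R] [CharZero R]

theorem sum_apply_mul_eq_apply_sum_mul_of_binary (f : R → R) (c : J → R)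
    (hbinary : ∀ j, w j = 0 ∨ w j = 1) (hsum : ∑ j, w j = 1) :
    ∑ j, f (c j) * w j = f (∑ j, c j * w j) := by
  classical
  obtain ⟨k, rfl⟩ := exists_eq_single_one_of_sum_eq_one hbinary hsum
  calc (f ∘ c) ⬝ᵥ Pi.single k 1
    _ = f (c k) := dotProduct_single_one (f ∘ c) k
    _ = f (c ⬝ᵥ Pi.single k 1) := congrArg f (dotProduct_single_one c k).symm

theorem nPCA1_lifted_optimality_general [LinearOrder R] {c : J → R} {z LB : R}
    (hbinary : ∀ j, w j = 0 ∨ w j = 1) (hsum : ∑ j, w j = 1)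
    (hcost : ∑ j, c j * w j ≤ z) (hLB : LB ≤ z) :
    ∑ j, max LB (c j) * w j ≤ z :=
  calc ∑ j, max LB (c j) * w j
    _ = max LB (∑ j, c j * w j) :=
      sum_apply_mul_eq_apply_sum_mul_of_binary (max LB) c hbinary hsum
    _ ≤ z := max_le hLB hcost

end BinaryWeights

/-- Lifted optimality inequality for formulation (nPCA1). -/
theorem nPCA1_lifted_optimality
    {I J : Type} [Fintype I] [Fintype J] [Nonempty I] [Nonempty J]
    (d : I → J → ℝ) (hd : ∀ i j, 0 ≤ d i j)
    (H : ℕ) (hH : 1 ≤ H) (p : Fin H → ℕ)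
    (x : I → J → Fin H → ℝ) (y : J → Fin H → ℝ) (z : Fin H → ℝ)
    (hx01 : ∀ i j h, x i j h = 0 ∨ x i j h = 1)
    (hy01 : ∀ j h, y j h = 0 ∨ y j h = 1)
    (hz0 : ∀ h, 0 ≤ z h)
    (hcard : ∀ h, ∑ j, y j h = (p h : ℝ))
    (hassign : ∀ i h, ∑ j, x i j h = 1)
    (hopen : ∀ i j h, x i j h ≤ y j h)
    (hdist : ∀ i h, ∑ j, d i j * x i j h ≤ z h)
    (hnest : ∀ j (h : ℕ) (hh : h + 1 < H),
      y j ⟨h, Nat.lt_of_succ_lt hh⟩ ≤ y j ⟨h + 1, hh⟩)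
    (h : Fin H) (LB : ℝ) (hLB0 : 0 ≤ LB) (hLBz : LB ≤ z h) :
    ∀ i, z h ≥ ∑ j, max LB (d i j) * x i j h :=
  fun i ↦ nPCA1_lifted_optimality_general (hx01 i · h) (hassign i h) (hdist i h) hLBz
end

section
/- Correctness of the distance constraints of formulation (nPCA2): let y : J → {0,1} have at least one j with y_j = 1, and let z ∈ ℝ. Then z satisfies z ≥ d_{ij} − Σ_{j' ∈ J : d_{ij'} < d_{ij}} (d_{ij} − d_{ij'}) y_{j'} for all i ∈ I and j ∈ J if and only if z ≥ max_{i ∈ I} min_{j ∈ J : y_j = 1} d_{ij}. -/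
attribute [local instance] Classical.propDecidable

/-- Covering radius: `d(S) = max_{i ∈ I} min_{j ∈ S} d i j` (junk value 0 for `S = ∅`). -/
noncomputable def covRad {I J : Type} [Fintype I] [Fintype J] [Nonempty I]
    (d : I → J → ℝ) (S : Finset J) : ℝ :=
  if h : S.Nonempty then
    Finset.univ.sup' Finset.univ_nonempty (fun i => S.inf' h (fun j => d i j))
  else 0

/-!
For a single customer with distances `c` to the facilities, the right-hand side of the constraint
indexed by `j` never exceeds `c k` when `k` is open: if `k` is nearer than `j`, its own term already
subtracts `c j - c k`. For `k` a nearest open facility, the constraint indexed by `k` attains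
this bound, as nothing nearer is open. So the distance to the nearest open facility is the
maximum of the right-hand sides.
-/

section DistanceBound

variable {J R : Type*} [Fintype J] [Ring R] [LinearOrder R]

/-- The right-hand side of the (nPCA2) distance constraint indexed by the facility `j`, for a single
customer whose distances to the facilities are given by `c`. -/
noncomputable def distanceBound (c y : J → R) (j : J) : R :=
  c j - ∑ j' ∈ Finset.univ.filter (fun j' => c j' < c j), (c j - c j') * y j'

theorem distanceBound_eq_of_forall_lt {c y : J → R} {j : J} (hy : ∀ j', c j' < c j → y j' = 0) :
    distanceBound c y j = c j := by
  have hsum : ∑ j' ∈ Finset.univ.filter (fun j' => c j' < c j), (c j - c j') * y j' = 0 :=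
    Finset.sum_eq_zero fun j' hj' => by rw [hy j' (Finset.mem_filter.mp hj').2, mul_zero]
  rw [distanceBound, hsum, sub_zero]

variable [IsOrderedRing R]

theorem distanceBound_le_of_one_le {c y : J → R} (hy : ∀ j, 0 ≤ y j) {k : J} (hk : 1 ≤ y k)
    (j : J) : distanceBound c y j ≤ c k := by
  have hnonneg : ∀ j' ∈ Finset.univ.filter (fun j' => c j' < c j), 0 ≤ (c j - c j') * y j' :=
    fun j' hj' => mul_nonneg (sub_nonneg.mpr (Finset.mem_filter.mp hj').2.le) (hy j')
  rw [distanceBound, sub_le_comm]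
  rcases lt_or_ge (c k) (c j) with hkj | hjk
  · calc c j - c k ≤ (c j - c k) * y k := le_mul_of_one_le_right (sub_nonneg.mpr hkj.le) hk
      _ ≤ _ := Finset.single_le_sum hnonneg (Finset.mem_filter.mpr ⟨Finset.mem_univ k, hkj⟩)
  · exact (sub_nonpos.mpr hjk).trans (Finset.sum_nonneg hnonneg)

theorem isGreatest_range_distanceBound {S : Finset J} (hS : S.Nonempty) (c : J → R) {y : J → R}
    (hy_one : ∀ j ∈ S, 1 ≤ y j) (hy_zero : ∀ j ∉ S, y j = 0) :
    IsGreatest (Set.range (distanceBound c y)) (S.inf' hS c) := by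
  obtain ⟨k, hkS, hk⟩ := S.exists_mem_eq_inf' hS c
  have hy : ∀ j, 0 ≤ y j := fun j => by
    by_cases hj : j ∈ S
    · exact zero_le_one.trans (hy_one j hj)
    · exact (hy_zero j hj).ge
  have hnearer : ∀ j, c j < c k → y j = 0 := fun j hj =>
    hy_zero j fun hjS => (hk ▸ S.inf'_le c hjS).not_gt hj
  rw [hk]
  exact ⟨⟨k, distanceBound_eq_of_forall_lt hnearer⟩,
    Set.forall_mem_range.mpr (distanceBound_le_of_one_le hy (hy_one k hkS))⟩

theorem nPCA2_distance_constraints_correct_general {I : Type*} (d : I → J → R) {S : Finset J}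
    (hS : S.Nonempty) {y : J → R} (hy_one : ∀ j ∈ S, 1 ≤ y j) (hy_zero : ∀ j ∉ S, y j = 0) (z : R) :
    (∀ i j, distanceBound (d i) y j ≤ z) ↔ ∀ i, S.inf' hS (d i) ≤ z :=
  forall_congr' fun i => Set.forall_mem_range.symm.trans
    (isLUB_le_iff (isGreatest_range_distanceBound hS (d i) hy_one hy_zero).isLUB).symm

end DistanceBound

theorem covRad_le_iff {I J : Type} [Fintype I] [Fintype J] [Nonempty I] {d : I → J → ℝ}
    {S : Finset J} (hS : S.Nonempty) {z : ℝ} :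
    covRad d S ≤ z ↔ ∀ i, S.inf' hS (d i) ≤ z := by
  simp [covRad, hS]

/-- Correctness of the distance constraints of formulation (nPCA2): the constraints
hold iff `z` is at least the covering radius of the set of open facilities. -/
theorem nPCA2_distance_constraints_correct
    {I J : Type} [Fintype I] [Fintype J] [Nonempty I] [Nonempty J]
    (d : I → J → ℝ) (hd : ∀ i j, 0 ≤ d i j)
    (y : J → ℝ) (hy01 : ∀ j, y j = 0 ∨ y j = 1) (hopen : ∃ j, y j = 1)
    (z : ℝ) :
    (∀ i j, z ≥ d i j -
        ∑ j' ∈ Finset.univ.filter (fun j' => d i j' < d i j), (d i j - d i j') * y j') ↔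
    z ≥ covRad d (Finset.univ.filter (fun j => y j = 1)) := by
  have hS : (Finset.univ.filter (fun j => y j = 1)).Nonempty :=
    Finset.filter_nonempty_iff.mpr (by simpa using hopen)
  have hy_one : ∀ j ∈ Finset.univ.filter (fun j => y j = 1), 1 ≤ y j :=
    fun j hj => (Finset.mem_filter.mp hj).2.ge
  have hy_zero : ∀ j ∉ Finset.univ.filter (fun j => y j = 1), y j = 0 :=
    fun j hj => (hy01 j).resolve_right (by simpa using hj)
  exact (nPCA2_distance_constraints_correct_general d hS hy_one hy_zero z).trans
    (covRad_le_iff hS).symm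
end

section
/- Lifted optimality inequality for formulation (nPCA2): let y : J → {0,1} have at least one j with y_j = 1, let z ∈ ℝ satisfy z ≥ d_{ij} − Σ_{j' : d_{ij'} < d_{ij}} (d_{ij} − d_{ij'}) y_{j'} for all i ∈ I, j ∈ J, and let LB ≥ 0 be such that z ≥ LB. Then for all i ∈ I and j ∈ J it holds that z ≥ max{LB, d_{ij}} − Σ_{j' : d_{ij'} < d_{ij}} ( max{LB, d_{ij}} − max{LB, d_{ij'}} ) y_{j'}. -/
attribute [local instance] Classical.propDecidable

/-!
Let `k` be the nearest open facility if it is closer than `j`, and `k = j` otherwise. No open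
facility is closer than `k`, so the inequality at `k` has an empty correction term and reads
`d k ≤ z`. On the other hand, for any monotone rescaling `φ` of the distances, the correction term
at `j` is at least `φ (d j) - φ (d k)`, so the rescaled lower bound at `j` is at most
`φ (d k) ≤ φ z`. Lifting by `LB` is the case `φ = max LB`, which fixes every `z ≥ LB`.
-/

section NearestOpenFacility

variable {J R : Type*}

theorem exists_eq_or_lt_and_forall_le [Finite J] [LinearOrder R] (c : J → R) (p : J → Prop)
    (j : J) : ∃ k, (k = j ∨ p k ∧ c k < c j) ∧ ∀ a, p a → c k ≤ c a := by
  obtain ⟨k, hk, hmin⟩ := Set.exists_min_image {a | a = j ∨ p a ∧ c a < c j} c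
    (Set.toFinite _) ⟨j, Or.inl rfl⟩
  refine ⟨k, hk, fun a ha ↦ ?_⟩
  rcases lt_or_ge (c a) (c j) with haj | hja
  · exact hmin a (Or.inr ⟨ha, haj⟩)
  · exact (hmin j (Or.inl rfl)).trans hja

variable [Fintype J] [Ring R] [LinearOrder R]

/-- The lower bound on the radius `z` imposed by the optimality inequality of (nPCA2) for one
customer, with distances `c` to the facilities, and the facility `j`. The distances are rescaled
by `φ`: `φ = id` gives the original inequality and `φ = max LB` the lifted one. The sum still
ranges over the facilities closer than `j` in the unscaled distances. -/
noncomputable def optimalityBound (φ : R → R) (c y : J → R) (j : J) : R :=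
  φ (c j) - ∑ a with c a < c j, (φ (c j) - φ (c a)) * y a

theorem optimalityBound_eq_of_forall_lt {φ : R → R} {c y : J → R} {k : J}
    (hclosed : ∀ a, c a < c k → y a = 0) : optimalityBound φ c y k = φ (c k) := by
  have hsum : ∑ a with c a < c k, (φ (c k) - φ (c a)) * y a = 0 :=
    Finset.sum_eq_zero fun a ha ↦ by rw [hclosed a ((Finset.mem_filter_univ a).mp ha), mul_zero]
  rw [optimalityBound, hsum, sub_zero]

theorem optimalityBound_le_of_lt [IsOrderedRing R] {φ : R → R} (hφ : Monotone φ) {c y : J → R}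
    (hy : ∀ a, 0 ≤ y a) {j k : J} (hkj : c k < c j) (hk : 1 ≤ y k) :
    optimalityBound φ c y j ≤ φ (c k) := by
  have hgap {a : J} (ha : c a < c j) : 0 ≤ φ (c j) - φ (c a) := sub_nonneg.mpr (hφ ha.le)
  rw [optimalityBound, sub_le_comm]
  calc φ (c j) - φ (c k)
      ≤ (φ (c j) - φ (c k)) * y k := le_mul_of_one_le_right (hgap hkj) hk
    _ ≤ ∑ a with c a < c j, (φ (c j) - φ (c a)) * y a :=
      Finset.single_le_sum (f := fun a ↦ (φ (c j) - φ (c a)) * y a)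
        (fun a ha ↦ mul_nonneg (hgap ((Finset.mem_filter_univ a).mp ha)) (hy a))
        ((Finset.mem_filter_univ k).mpr hkj)

theorem nPCA2_lifted_optimality_general [IsOrderedRing R] {φ : R → R} (hφ : Monotone φ)
    {c y : J → R} (hy : ∀ a, y a = 0 ∨ 1 ≤ y a) {z : R} (hφz : φ z ≤ z)
    (hz : ∀ j, optimalityBound id c y j ≤ z) (j : J) : optimalityBound φ c y j ≤ z := by
  obtain ⟨k, hkj, hnearest⟩ := exists_eq_or_lt_and_forall_le c (1 ≤ y ·) j
  have hclosed (a : J) (ha : c a < c k) : y a = 0 :=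
    (hy a).resolve_right fun hopen ↦ (hnearest a hopen).not_gt ha
  have hkz : c k ≤ z := (optimalityBound_eq_of_forall_lt hclosed).symm.trans_le (hz k)
  have hy_nonneg (a : J) : 0 ≤ y a := (hy a).elim Eq.ge zero_le_one.trans
  calc optimalityBound φ c y j
      ≤ φ (c k) := by
        rcases hkj with rfl | ⟨hopen, hlt⟩
        · exact (optimalityBound_eq_of_forall_lt hclosed).le
        · exact optimalityBound_le_of_lt hφ hy_nonneg hlt hopen
    _ ≤ φ z := hφ hkz
    _ ≤ z := hφz

end NearestOpenFacility

/-- Lifted optimality inequality for formulation (nPCA2). -/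
theorem nPCA2_lifted_optimality
    {I J : Type} [Fintype I] [Fintype J] [Nonempty I] [Nonempty J]
    (d : I → J → ℝ) (hd : ∀ i j, 0 ≤ d i j)
    (y : J → ℝ) (hy01 : ∀ j, y j = 0 ∨ y j = 1) (hopen : ∃ j, y j = 1)
    (z : ℝ)
    (hz : ∀ i j, z ≥ d i j -
        ∑ j' ∈ Finset.univ.filter (fun j' => d i j' < d i j), (d i j - d i j') * y j')
    (LB : ℝ) (hLB0 : 0 ≤ LB) (hLBz : LB ≤ z) :
    ∀ i j, z ≥ max LB (d i j) -
        ∑ j' ∈ Finset.univ.filter (fun j' => d i j' < d i j),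
          (max LB (d i j) - max LB (d i j')) * y j' := by
  intro i
  exact nPCA2_lifted_optimality_general (monotone_const.max monotone_id)
    (fun j ↦ (hy01 j).imp_right Eq.ge) (max_le hLBz le_rfl) (hz i)
end

section
/- Variable fixing from an upper bound in formulation (nPCA3): let 0 ≤ D_0 ≤ D_1 ≤ … ≤ D_K be real numbers, let u : {1,…,K} → {0,1} be nonincreasing (u_k ≥ u_{k+1} for all k < K), and let z, UB ∈ ℝ satisfy D_0 + Σ_{k=1}^K (D_k − D_{k-1}) u_k ≤ z and z ≤ UB. Then u_k = 0 for every index k with D_k > UB. -/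
/-!
Telescoping `D k - D 0` over the first `k` increments and using `u k ≤ u j` for `j ≤ k` gives
`D 0 + (D k - D 0) * u k ≤ z`, the increments beyond `k` contributing nonnegative terms.
If `1 ≤ u k`, the left-hand side is at least `D k`, so `D k ≤ z ≤ UB`. Hence `UB < D k` forces
`u k < 1` already in the continuous relaxation `0 ≤ u`, and a binary value below `1` is `0`.
-/

theorem sum_Icc_one_sub_pred {G : Type*} [AddCommGroup G] (f : ℕ → G) (n : ℕ) :
    ∑ j ∈ Finset.Icc 1 n, (f j - f (j - 1)) = f n - f 0 := by
  simp only [← Finset.Ico_add_one_right_eq_Icc, Finset.sum_Ico_eq_sum_range, add_comm 1,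
    Nat.add_sub_cancel, Finset.sum_range_sub]

theorem sub_mul_le_sum_sub_pred_mul {R : Type*} [Ring R] [PartialOrder R] [IsOrderedRing R]
    {D u : ℕ → R} {k K : ℕ} (hD : MonotoneOn D (Set.Iic K)) (hu : AntitoneOn u (Set.Icc 1 K))
    (hu_nonneg : ∀ j ∈ Set.Icc 1 K, 0 ≤ u j) (hkK : k ≤ K) :
    (D k - D 0) * u k ≤ ∑ j ∈ Finset.Icc 1 K, (D j - D (j - 1)) * u j := by
  have increment_nonneg : ∀ j ≤ K, 0 ≤ D j - D (j - 1) := fun j hj ↦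
    sub_nonneg.2 (hD ((j.sub_le 1).trans hj) hj (j.sub_le 1))
  calc (D k - D 0) * u k
      = ∑ j ∈ Finset.Icc 1 k, (D j - D (j - 1)) * u k := by
        rw [← Finset.sum_mul, sum_Icc_one_sub_pred]
    _ ≤ ∑ j ∈ Finset.Icc 1 k, (D j - D (j - 1)) * u j := by
        refine Finset.sum_le_sum fun j hj ↦ ?_
        obtain ⟨h1j, hjk⟩ := Finset.mem_Icc.1 hj
        exact mul_le_mul_of_nonneg_left
          (hu ⟨h1j, hjk.trans hkK⟩ ⟨h1j.trans hjk, hkK⟩ hjk) (increment_nonneg j (hjk.trans hkK))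
    _ ≤ ∑ j ∈ Finset.Icc 1 K, (D j - D (j - 1)) * u j := by
        refine Finset.sum_le_sum_of_subset_of_nonneg (Finset.Icc_subset_Icc_right hkK)
          fun j hj _ ↦ ?_
        have hj := Finset.mem_Icc.1 hj
        exact mul_nonneg (increment_nonneg j hj.2) (hu_nonneg j hj)

theorem nPCA3_upper_bound_fixing_general {R : Type*} [Ring R] [LinearOrder R] [IsOrderedRing R]
    {K : ℕ} {D u : ℕ → R} {z UB : R} (hDmono : ∀ k, k < K → D k ≤ D (k + 1))
    (hu_nonneg : ∀ k, 1 ≤ k → k ≤ K → 0 ≤ u k)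
    (humono : ∀ k, 1 ≤ k → k < K → u (k + 1) ≤ u k)
    (hlink : D 0 + ∑ k ∈ Finset.Icc 1 K, (D k - D (k - 1)) * u k ≤ z) (hzUB : z ≤ UB) :
    ∀ k, k ≤ K → UB < D k → u k < 1 := by
  intro k hkK hUB
  have hD : MonotoneOn D (Set.Iic K) :=
    monotoneOn_of_le_add_one Set.ordConnected_Iic fun j _ _ hj ↦ hDmono j hj
  have hu : AntitoneOn u (Set.Icc 1 K) :=
    antitoneOn_of_add_one_le Set.ordConnected_Icc fun j _ hj hj' ↦ humono j hj.1 hj'.2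
  by_contra! one_le
  refine hUB.not_ge ?_
  calc D k = D 0 + (D k - D 0) := (add_sub_cancel _ _).symm
    _ ≤ D 0 + (D k - D 0) * u k := by
        gcongr
        exact le_mul_of_one_le_right (sub_nonneg.2 (hD K.zero_le hkK k.zero_le)) one_le
    _ ≤ D 0 + ∑ j ∈ Finset.Icc 1 K, (D j - D (j - 1)) * u j := by
        gcongr
        exact sub_mul_le_sum_sub_pred_mul hD hu (fun j hj ↦ hu_nonneg j hj.1 hj.2) hkK
    _ ≤ UB := hlink.trans hzUB

/-- Variable fixing from an upper bound in formulation (nPCA3):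
indices `k ∈ {1,…,K}` with `D k > UB` have `u k = 0`. -/
theorem nPCA3_upper_bound_fixing
    (K : ℕ) (D : ℕ → ℝ) (hD0 : 0 ≤ D 0)
    (hDmono : ∀ k, k < K → D k ≤ D (k + 1))
    (u : ℕ → ℝ)
    (hu01 : ∀ k, 1 ≤ k → k ≤ K → u k = 0 ∨ u k = 1)
    (humono : ∀ k, 1 ≤ k → k < K → u (k + 1) ≤ u k)
    (z UB : ℝ)
    (hlink : D 0 + ∑ k ∈ Finset.Icc 1 K, (D k - D (k - 1)) * u k ≤ z)
    (hzUB : z ≤ UB) :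
    ∀ k, 1 ≤ k → k ≤ K → UB < D k → u k = 0 := by
  have hu_nonneg (k) (h1k : 1 ≤ k) (hkK : k ≤ K) : 0 ≤ u k := by grind
  exact fun k h1k hkK hUB ↦ (hu01 k h1k hkK).resolve_right
    (nPCA3_upper_bound_fixing_general hDmono hu_nonneg humono hlink hzUB k hkK hUB).ne
end

section
/- Variable fixing from a lower bound in formulation (nPCA3): let 0 ≤ D_0 ≤ D_1 ≤ … ≤ D_K be real numbers, let u : {1,…,K} → {0,1} be nonincreasing, and let z, LB ∈ ℝ satisfy D_0 + Σ_{k=1}^K (D_k − D_{k-1}) u_k ≤ z and z ≥ LB. Define u'_k = 1 if D_k < LB and u'_k = u_k otherwise, and let k' = min{k : D_k ≥ LB} (taking k' = K+1 if no such k exists, with D_{k'-1} = D_0 when k' = 1). Then u' is again nonincreasing, D_0 + Σ_{k=1}^K (D_k − D_{k-1}) u'_k = D_{k'-1} + Σ_{k=k'}^K (D_k − D_{k-1}) u_k, and D_0 + Σ_{k=1}^K (D_k − D_{k-1}) u'_k ≤ z. -/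
/-!
A binary nonincreasing `u` is a block of ones below some index `m` followed by zeros, and for such
a vector the linking sum telescopes to `D (m - 1)`. Fixing the entries below `k'` to one only
replaces `m` by `max k' m`, so the new linking sum is either the old one or, when `k' > m`, the
value `D (k' - 1)`, which lies below the lower bound.
-/

theorem add_sum_Ico_one_sub_pred {G : Type*} [AddCommGroup G] (D : ℕ → G) {m : ℕ} (hm : 1 ≤ m) :
    D 0 + ∑ k ∈ Finset.Ico 1 m, (D k - D (k - 1)) = D (m - 1) := by
  obtain ⟨n, rfl⟩ := Nat.exists_eq_add_of_le' hm
  rw [← Finset.sum_Ico_add' _ 0 n 1]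
  simp only [add_tsub_cancel_right]
  rw [Finset.sum_Ico_sub D n.zero_le, add_sub_cancel]

section LinkingSum

variable {R : Type*} [Ring R]

/-- The left-hand side of the linking constraint of formulation (nPCA3), where `D 0` is the base
value. Only the entries `u 1, …, u K` matter. -/
def linkingSum (D : ℕ → R) (K : ℕ) (u : ℕ → R) : R :=
  D 0 + ∑ k ∈ Finset.Icc 1 K, (D k - D (k - 1)) * u k

theorem linkingSum_congr (D : ℕ → R) {K : ℕ} {u v : ℕ → R} (h : Set.EqOn u v (Set.Icc 1 K)) :
    linkingSum D K u = linkingSum D K v := by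
  unfold linkingSum
  congr 1
  exact Finset.sum_congr rfl fun k hk => by rw [h (Finset.mem_Icc.1 hk)]

end LinkingSum

section FixBelow

variable {R : Type*} [One R]

/-- The variable fixing of the entries of `u` with index below `m` to one. Applied to `u = 0` it is
the general form of a binary nonincreasing vector. -/
def fixBelow (m : ℕ) (u : ℕ → R) (k : ℕ) : R :=
  if k < m then 1 else u k

theorem fixBelow_of_lt {m k : ℕ} (u : ℕ → R) (h : k < m) : fixBelow m u k = 1 :=
  if_pos h

theorem fixBelow_of_le {m k : ℕ} (u : ℕ → R) (h : m ≤ k) : fixBelow m u k = u k :=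
  if_neg h.not_gt

theorem fixBelow_fixBelow (m n : ℕ) (u : ℕ → R) :
    fixBelow m (fixBelow n u) = fixBelow (max m n) u := by
  funext k
  simp only [fixBelow, lt_max_iff, ite_or]

theorem eqOn_fixBelow (m : ℕ) {u v : ℕ → R} {s : Set ℕ} (h : Set.EqOn u v s) :
    Set.EqOn (fixBelow m u) (fixBelow m v) s := by
  intro k hk
  simp only [fixBelow, h hk]

theorem antitoneOn_fixBelow [Preorder R] (m : ℕ) {u : ℕ → R} {s : Set ℕ}
    (hu : AntitoneOn u s) (hu_le : ∀ k ∈ s, u k ≤ 1) : AntitoneOn (fixBelow m u) s := by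
  intro i hi j hj hij
  rcases lt_or_ge i m with him | hmi
  · rw [fixBelow_of_lt u him]
    unfold fixBelow
    split_ifs
    exacts [le_rfl, hu_le j hj]
  · rw [fixBelow_of_le u hmi, fixBelow_of_le u (hmi.trans hij)]
    exact hu hi hj hij

theorem exists_eqOn_fixBelow_zero [Zero R] [PartialOrder R] [ZeroLEOneClass R] [NeZero (1 : R)]
    {K : ℕ} {u : ℕ → R} (hu : AntitoneOn u (Set.Icc 1 K))
    (hu01 : ∀ k ∈ Set.Icc 1 K, u k = 0 ∨ u k = 1) :
    ∃ m, 1 ≤ m ∧ Set.EqOn u (fixBelow m 0) (Set.Icc 1 K) := by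
  classical
  set j := Nat.findGreatest (fun k => u k = 1) K with hj
  refine ⟨j + 1, by lia, fun k hk => ?_⟩
  rcases lt_or_ge k (j + 1) with hkj | hjk
  · rw [fixBelow_of_lt 0 hkj]
    have h_one : u j = 1 := Nat.findGreatest_of_ne_zero hj.symm (by grind)
    have h_le : 1 ≤ u k := h_one ▸ hu hk ⟨by grind, hj ▸ Nat.findGreatest_le K⟩ (by lia)
    exact (hu01 k hk).resolve_left fun h_zero => (zero_lt_one.trans_le h_le).ne' h_zero
  · rw [fixBelow_of_le 0 hjk]
    exact (hu01 k hk).resolve_right (Nat.findGreatest_is_greatest hjk hk.2)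

end FixBelow

section FixedLinkingSum

variable {R : Type*} [Ring R]

theorem linkingSum_fixBelow (D u : ℕ → R) {K m : ℕ} (hm : 1 ≤ m) (hmK : m ≤ K + 1) :
    linkingSum D K (fixBelow m u)
      = D (m - 1) + ∑ k ∈ Finset.Icc m K, (D k - D (k - 1)) * u k := by
  have h_low : ∑ k ∈ Finset.Ico 1 m, (D k - D (k - 1)) * fixBelow m u k
      = ∑ k ∈ Finset.Ico 1 m, (D k - D (k - 1)) :=
    Finset.sum_congr rfl fun k hk => by
      rw [fixBelow_of_lt u (Finset.mem_Ico.1 hk).2, mul_one]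
  have h_high : ∑ k ∈ Finset.Ico m (K + 1), (D k - D (k - 1)) * fixBelow m u k
      = ∑ k ∈ Finset.Ico m (K + 1), (D k - D (k - 1)) * u k :=
    Finset.sum_congr rfl fun k hk => by
      rw [fixBelow_of_le u (Finset.mem_Ico.1 hk).1]
  simp only [linkingSum, ← Finset.Ico_add_one_right_eq_Icc]
  rw [← Finset.sum_Ico_consecutive _ hm hmK, h_low, h_high, ← add_assoc,
    add_sum_Ico_one_sub_pred D hm]

theorem linkingSum_fixBelow_zero (D : ℕ → R) {K m : ℕ} (hm : 1 ≤ m) (hmK : m ≤ K + 1) :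
    linkingSum D K (fixBelow m 0) = D (m - 1) := by
  simp [linkingSum_fixBelow D 0 hm hmK]

theorem linkingSum_fixBelow_eq_or [PartialOrder R] [ZeroLEOneClass R] [NeZero (1 : R)]
    (D : ℕ → R) {u : ℕ → R} {K k' : ℕ} (hu : AntitoneOn u (Set.Icc 1 K))
    (hu01 : ∀ k ∈ Set.Icc 1 K, u k = 0 ∨ u k = 1) (hk'le : k' ≤ K + 1) :
    linkingSum D K (fixBelow k' u) = linkingSum D K u ∨
      1 < k' ∧ linkingSum D K (fixBelow k' u) = D (k' - 1) := by
  obtain ⟨m, hm, hum⟩ := exists_eqOn_fixBelow_zero hu hu01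
  rw [linkingSum_congr D (eqOn_fixBelow k' hum), linkingSum_congr D hum, fixBelow_fixBelow]
  rcases le_or_gt k' m with hk'm | hmk'
  · exact .inl (by rw [max_eq_right hk'm])
  · have hk' : 1 < k' := hm.trans_lt hmk'
    exact .inr ⟨hk', by rw [max_eq_left hmk'.le, linkingSum_fixBelow_zero D hk'.le hk'le]⟩

end FixedLinkingSum

theorem nPCA3_lower_bound_fixing_general {R : Type*} [Ring R] [LinearOrder R] [ZeroLEOneClass R]
    [NeZero (1 : R)] (K : ℕ) (D u : ℕ → R)
    (hu01 : ∀ k, 1 ≤ k → k ≤ K → u k = 0 ∨ u k = 1)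
    (humono : ∀ k, 1 ≤ k → k < K → u (k + 1) ≤ u k)
    (z LB : R) (hlink : linkingSum D K u ≤ z) (hzLB : LB ≤ z)
    (k' : ℕ) (hk'1 : 1 ≤ k') (hk'le : k' ≤ K + 1)
    (hk'char : ∀ k, 1 ≤ k → k ≤ K → (LB ≤ D k ↔ k' ≤ k))
    (u' : ℕ → R) (hu' : ∀ k, u' k = if D k < LB then 1 else u k) :
    (∀ k, 1 ≤ k → k < K → u' (k + 1) ≤ u' k) ∧
    linkingSum D K u' = D (k' - 1) + ∑ k ∈ Finset.Icc k' K, (D k - D (k - 1)) * u k ∧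
    linkingSum D K u' ≤ z := by
  have hD_lt (k : ℕ) (hk : k ∈ Set.Icc 1 K) : D k < LB ↔ k < k' := by
    rw [← not_le, hk'char k hk.1 hk.2, not_le]
  have hu'_eq : Set.EqOn u' (fixBelow k' u) (Set.Icc 1 K) := fun k hk => by
    simp only [hu', fixBelow, hD_lt k hk]
  have hu : AntitoneOn u (Set.Icc 1 K) :=
    antitoneOn_of_add_one_le Set.ordConnected_Icc fun k _ hk hk1 => humono k hk.1 hk1.2
  have hu_le (k : ℕ) (hk : k ∈ Set.Icc 1 K) : u k ≤ 1 := by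
    rcases hu01 k hk.1 hk.2 with h | h <;> simp [h]
  have hu'_anti : AntitoneOn u' (Set.Icc 1 K) := (antitoneOn_fixBelow k' hu hu_le).congr hu'_eq.symm
  rw [linkingSum_congr D hu'_eq]
  refine ⟨fun k hk hkK => hu'_anti ⟨hk, hkK.le⟩ ⟨by lia, hkK⟩ k.le_succ,
    linkingSum_fixBelow D u hk'1 hk'le, ?_⟩
  rcases linkingSum_fixBelow_eq_or D hu (fun k hk => hu01 k hk.1 hk.2) hk'le with h | ⟨hk', h⟩
  · exact h.trans_le hlink
  · exact h.trans_le (((hD_lt (k' - 1) ⟨by lia, by lia⟩).2 (by lia)).le.trans hzLB)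

/-- Variable fixing from a lower bound in formulation (nPCA3): fixing `u k = 1` for all
`k` with `D k < LB` keeps the solution nonincreasing, rewrites the linking sum starting
from the critical index `k'`, and preserves feasibility of the linking constraint. -/
theorem nPCA3_lower_bound_fixing
    (K : ℕ) (D : ℕ → ℝ) (hD0 : 0 ≤ D 0)
    (hDmono : ∀ k, k < K → D k ≤ D (k + 1))
    (u : ℕ → ℝ)
    (hu01 : ∀ k, 1 ≤ k → k ≤ K → u k = 0 ∨ u k = 1)
    (humono : ∀ k, 1 ≤ k → k < K → u (k + 1) ≤ u k)
    (z LB : ℝ)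
    (hlink : D 0 + ∑ k ∈ Finset.Icc 1 K, (D k - D (k - 1)) * u k ≤ z)
    (hzLB : LB ≤ z)
    (k' : ℕ) (hk'1 : 1 ≤ k') (hk'le : k' ≤ K + 1)
    (hk'char : ∀ k, 1 ≤ k → k ≤ K → (LB ≤ D k ↔ k' ≤ k))
    (u' : ℕ → ℝ) (hu' : ∀ k, u' k = if D k < LB then 1 else u k) :
    (∀ k, 1 ≤ k → k < K → u' (k + 1) ≤ u' k) ∧
    D 0 + ∑ k ∈ Finset.Icc 1 K, (D k - D (k - 1)) * u' k
      = D (k' - 1) + ∑ k ∈ Finset.Icc k' K, (D k - D (k - 1)) * u k ∧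
    D 0 + ∑ k ∈ Finset.Icc 1 K, (D k - D (k - 1)) * u' k ≤ z :=
  nPCA3_lower_bound_fixing_general K D u hu01 humono z LB hlink hzLB k' hk'1 hk'le hk'char u' hu'
end

section
/- Lifted optimality inequality for formulation (nPCR2): assume d^{h*} > 0 for all h, let y : J × {1,…,H} → {0,1} and w ∈ ℝ satisfy w ≥ (1/d^{h*}) ( d_{ij} − Σ_{j' : d_{ij'} < d_{ij}} (d_{ij} − d_{ij'}) y_{j'}^h ) − 1 for all i ∈ I, j ∈ J, h ∈ {1,…,H}, and let LB ≥ 0 be such that w ≥ LB. Then for all i ∈ I, j ∈ J, h ∈ {1,…,H}: w ≥ (1/d^{h*}) ( max{LB·d^{h*}, d_{ij}} − Σ_{j' : d_{ij'} < d_{ij}} ( max{LB·d^{h*}, d_{ij}} − max{LB·d^{h*}, d_{ij'}} ) y_{j'}^h ) − 1. -/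
attribute [local instance] Classical.propDecidable

/-- The p-center optimal value `d*(p) = min { d(S) : S ⊆ J, |S| = p }`. -/
noncomputable def pCenterOpt {I J : Type} [Fintype I] [Fintype J] [Nonempty I]
    (d : I → J → ℝ) (p : ℕ) : ℝ :=
  sInf { v : ℝ | ∃ S : Finset J, S.card = p ∧ v = covRad d S }

/-!
Fix a customer, a period and a candidate distance `r`. Lifting replaces every distance `x` by
`max A x`, where `A = LB * d^{h*}`. If some open site lies within `A`, its term alone brings the
lifted bound down to `A`; if `r ≤ A`, the lifted bound is at most `max A r = A`. Otherwise `r` and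
every open site lie beyond `A`, and lifting changes nothing. So the lifted bound is at most the
maximum of `A` and the unlifted one, both of which are at most `(w + 1) * d^{h*}`.
-/

section AssignmentBound

variable {ι R : Type*} [Ring R]

/-- The bound on the assignment distance of one customer in the radius constraints of (nPCR2), with
`c` the distances from this customer to the sites, `y` their opening variables and `r` the candidate
distance. The set `s` is arbitrary; (nPCR2) takes the sites with `c k < r`. -/
def assignmentBound (s : Finset ι) (y c : ι → R) (r : R) : R :=
  r - ∑ k ∈ s, (r - c k) * y k

variable [LinearOrder R] {s : Finset ι} {y c : ι → R} {r A : R}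

lemma assignmentBound_max_eq (hA : A ≤ r) (hy : ∀ k ∈ s, y k = 0 ∨ A ≤ c k) :
    assignmentBound s y (fun k => max A (c k)) (max A r) = assignmentBound s y c r := by
  unfold assignmentBound
  rw [max_eq_right hA]
  congr 1
  refine Finset.sum_congr rfl fun k hk => ?_
  rcases hy k hk with h_closed | h_far
  · rw [h_closed, mul_zero, mul_zero]
  · simp only [max_eq_right h_far]

variable [IsOrderedRing R]

lemma assignmentBound_le_self (hy : ∀ k ∈ s, 0 ≤ y k) (hc : ∀ k ∈ s, c k ≤ r) :
    assignmentBound s y c r ≤ r :=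
  sub_le_self _ <| Finset.sum_nonneg fun k hk => mul_nonneg (sub_nonneg.2 (hc k hk)) (hy k hk)

lemma assignmentBound_le_of_one_le (hy : ∀ k ∈ s, 0 ≤ y k) (hc : ∀ k ∈ s, c k ≤ r)
    {k : ι} (hk : k ∈ s) (hyk : 1 ≤ y k) : assignmentBound s y c r ≤ c k := by
  have h_gap : r - c k ≤ ∑ k' ∈ s, (r - c k') * y k' :=
    calc
      r - c k ≤ (r - c k) * y k := le_mul_of_one_le_right (sub_nonneg.2 (hc k hk)) hyk
      _ ≤ ∑ k' ∈ s, (r - c k') * y k' :=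
        Finset.single_le_sum (f := fun k' => (r - c k') * y k')
          (fun k' hk' => mul_nonneg (sub_nonneg.2 (hc k' hk')) (hy k' hk')) hk
  exact sub_le_comm.1 h_gap

theorem assignmentBound_max_le (hy : ∀ k ∈ s, y k = 0 ∨ 1 ≤ y k) (hc : ∀ k ∈ s, c k ≤ r) :
    assignmentBound s y (fun k => max A (c k)) (max A r) ≤
      max A (assignmentBound s y c r) := by
  have hy_nonneg : ∀ k ∈ s, 0 ≤ y k := fun k hk =>
    (hy k hk).elim Eq.ge zero_le_one.trans
  have hc_max : ∀ k ∈ s, max A (c k) ≤ max A r := fun k hk => max_le_max_left A (hc k hk)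
  by_cases h_near : ∃ k ∈ s, 1 ≤ y k ∧ c k ≤ A
  · obtain ⟨k, hk, hyk, hck⟩ := h_near
    calc
      _ ≤ max A (c k) := assignmentBound_le_of_one_le hy_nonneg hc_max hk hyk
      _ = A := max_eq_left hck
      _ ≤ _ := le_max_left _ _
  rcases le_total r A with hr | hr
  · calc
      _ ≤ max A r := assignmentBound_le_self hy_nonneg hc_max
      _ = A := max_eq_left hr
      _ ≤ _ := le_max_left _ _
  · have h_far : ∀ k ∈ s, y k = 0 ∨ A ≤ c k := fun k hk =>
      (hy k hk).imp_right fun hyk => (lt_of_not_ge fun hck => h_near ⟨k, hk, hyk, hck⟩).le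
    exact (assignmentBound_max_eq hr h_far).trans_le (le_max_right _ _)

end AssignmentBound

theorem nPCR2_lifted_optimality_general
    {ι K : Type*} [Field K] [LinearOrder K] [IsStrictOrderedRing K]
    {s : Finset ι} {y c : ι → K} {r D w A : K} (hD : 0 < D)
    (hy : ∀ k ∈ s, y k = 0 ∨ 1 ≤ y k) (hc : ∀ k ∈ s, c k ≤ r)
    (hw : 1 / D * assignmentBound s y c r - 1 ≤ w) (hA : A ≤ (w + 1) * D) :
    1 / D * assignmentBound s y (fun k => max A (c k)) (max A r) - 1 ≤ w := by
  rw [sub_le_iff_le_add, one_div_mul_eq_div, div_le_iff₀ hD] at hw ⊢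
  exact (assignmentBound_max_le hy hc).trans (max_le hA hw)

/-- Lifted optimality inequality for formulation (nPCR2). -/
theorem nPCR2_lifted_optimality
    {I J : Type} [Fintype I] [Fintype J] [Nonempty I] [Nonempty J]
    (d : I → J → ℝ) (hd : ∀ i j, 0 ≤ d i j)
    (H : ℕ) (hH : 1 ≤ H) (p : Fin H → ℕ)
    (dstar : Fin H → ℝ) (hdstar : ∀ h, dstar h = pCenterOpt d (p h))
    (hpos : ∀ h, 0 < dstar h)
    (y : J → Fin H → ℝ) (hy01 : ∀ j h, y j h = 0 ∨ y j h = 1)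
    (w : ℝ)
    (hw : ∀ i j h, w ≥ (1 / dstar h) *
        (d i j - ∑ j' ∈ Finset.univ.filter (fun j' => d i j' < d i j),
          (d i j - d i j') * y j' h) - 1)
    (LB : ℝ) (hLB0 : 0 ≤ LB) (hLBw : LB ≤ w) :
    ∀ i j h, w ≥ (1 / dstar h) *
        (max (LB * dstar h) (d i j) -
          ∑ j' ∈ Finset.univ.filter (fun j' => d i j' < d i j),
            (max (LB * dstar h) (d i j) - max (LB * dstar h) (d i j')) * y j' h) - 1 := by
  intro i j h
  exact nPCR2_lifted_optimality_general (hpos h) (fun k _ => (hy01 k h).imp_right Eq.ge)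
    (fun _ hk => (Finset.mem_filter.1 hk).2.le) (hw i j h)
    (mul_le_mul_of_nonneg_right (hLBw.trans (lt_add_one w).le) (hpos h).le)
end

section
/- Critical facility yields the maximum violation: let d_1 ≤ d_2 ≤ … ≤ d_n be real numbers and let y_1, …, y_n ∈ [0,1] with Σ_{j=1}^n y_j ≥ 1. Define f(j) = d_j − Σ_{j'=1}^{j-1} (d_j − d_{j'}) y_{j'} for j = 1, …, n, and let j* be the smallest index with Σ_{j'=1}^{j*} y_{j'} ≥ 1. Then f(j) ≤ f(j*) for every j ∈ {1, …, n}. -/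
/-!
For a fixed set `A` of facilities, `t ↦ t - ∑ i ∈ A, (t - d i) * y i` is affine with slope
`1 - ∑ i ∈ A, y i`. At `t = d j` the least of these functions is the one of `{i | i < j}`, which
subtracts only nonnegative terms and leaves out only nonpositive ones; its value is `f j`.
For `j ≤ j*` compare `f j` with the function of `{i | i < j*}`, which is nondecreasing; for
`j ≥ j*` with the function of `{i | i ≤ j*}`, which is nonincreasing. Both take the value `f j*`
at `d j*`.
-/

section CutRhs

variable {ι R : Type*} [Ring R]

/-- The right-hand side of the candidate cut `z ≥ t - ∑ i ∈ A, (t - d i) * y i`, with the set `A` of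
facilities and the distance `t` decoupled: facility `j` gives `f j` as the value at
`A = {i | i < j}` and `t = d j`. -/
def cutRhs (d y : ι → R) (A : Finset ι) (t : R) : R :=
  t - ∑ i ∈ A, (t - d i) * y i

theorem cutRhs_sub_cutRhs (d y : ι → R) (A : Finset ι) (s t : R) :
    cutRhs d y A t - cutRhs d y A s = (t - s) * (1 - ∑ i ∈ A, y i) := by
  have sum_sub : ∑ i ∈ A, (t - d i) * y i - ∑ i ∈ A, (s - d i) * y i = (t - s) * ∑ i ∈ A, y i := by
    simp only [← Finset.sum_sub_distrib, ← sub_mul, sub_sub_sub_cancel_right, Finset.mul_sum]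
  rw [cutRhs, cutRhs, sub_sub_sub_comm, sum_sub, mul_one_sub]

theorem cutRhs_insert_self [DecidableEq ι] (d y : ι → R) (A : Finset ι) (j : ι) :
    cutRhs d y (insert j A) (d j) = cutRhs d y A (d j) := by
  rw [cutRhs, cutRhs, Finset.sum_insert_zero (by rw [sub_self, zero_mul])]

variable [PartialOrder R] [IsOrderedRing R] {d y : ι → R} {A B : Finset ι} {t : R}

theorem monotone_cutRhs (hA : ∑ i ∈ A, y i ≤ 1) : Monotone (cutRhs d y A) := fun s t hst ↦ by
  rw [← sub_nonneg, cutRhs_sub_cutRhs]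
  exact mul_nonneg (sub_nonneg.2 hst) (sub_nonneg.2 hA)

theorem antitone_cutRhs (hA : 1 ≤ ∑ i ∈ A, y i) : Antitone (cutRhs d y A) := fun s t hst ↦ by
  rw [← sub_nonpos, cutRhs_sub_cutRhs]
  exact mul_nonpos_of_nonneg_of_nonpos (sub_nonneg.2 hst) (sub_nonpos.2 hA)

theorem cutRhs_le_cutRhs [DecidableEq ι] (hyA : ∀ i ∈ A \ B, 0 ≤ y i) (hyB : ∀ i ∈ B \ A, 0 ≤ y i)
    (hA : ∀ i ∈ A \ B, d i ≤ t) (hB : ∀ i ∈ B \ A, t ≤ d i) :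
    cutRhs d y A t ≤ cutRhs d y B t := by
  have sum_nonneg : 0 ≤ ∑ i ∈ A \ B, (t - d i) * y i :=
    Finset.sum_nonneg fun i hi ↦ mul_nonneg (sub_nonneg.2 (hA i hi)) (hyA i hi)
  have sum_nonpos : ∑ i ∈ B \ A, (t - d i) * y i ≤ 0 :=
    Finset.sum_nonpos fun i hi ↦
      mul_nonpos_of_nonpos_of_nonneg (sub_nonpos.2 (hB i hi)) (hyB i hi)
  refine sub_le_sub_left (sub_nonneg.1 ?_) t
  rw [← Finset.sum_sdiff_sub_sum_sdiff]
  exact sub_nonneg.2 (sum_nonpos.trans sum_nonneg)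

variable [LinearOrder ι] [LocallyFiniteOrder ι] {a b j : ι}

theorem cutRhs_Ico_le (hd : MonotoneOn d (Set.Icc a b)) (hy : ∀ i ∈ Set.Icc a b, 0 ≤ y i)
    (hj : j ∈ Set.Icc a b) (hA : A ⊆ Finset.Icc a b) :
    cutRhs d y (Finset.Ico a j) (d j) ≤ cutRhs d y A (d j) := by
  have mem_of_mem_Ico {i : ι} (hi : i ∈ Finset.Ico a j) : i ∈ Set.Icc a b ∧ i ≤ j := by
    obtain ⟨hai, hij⟩ := Finset.mem_Ico.1 hi
    exact ⟨⟨hai, hij.le.trans hj.2⟩, hij.le⟩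
  have mem_of_mem_sdiff {i : ι} (hi : i ∈ A \ Finset.Ico a j) : i ∈ Set.Icc a b ∧ j ≤ i := by
    obtain ⟨hiA, hij⟩ := Finset.mem_sdiff.1 hi
    have hi' := Finset.mem_Icc.1 (hA hiA)
    exact ⟨hi', not_lt.1 fun h ↦ hij (Finset.mem_Ico.2 ⟨hi'.1, h⟩)⟩
  refine cutRhs_le_cutRhs (fun i hi ↦ ?_) (fun i hi ↦ ?_) (fun i hi ↦ ?_) fun i hi ↦ ?_
  · exact hy i (mem_of_mem_Ico (Finset.mem_sdiff.1 hi).1).1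
  · exact hy i (mem_of_mem_sdiff hi).1
  · obtain ⟨hi', hij⟩ := mem_of_mem_Ico (Finset.mem_sdiff.1 hi).1
    exact hd hi' hj hij
  · obtain ⟨hi', hji⟩ := mem_of_mem_sdiff hi
    exact hd hj hi' hji

theorem critical_facility_max_violation_general {jstar : ι}
    (hd : MonotoneOn d (Set.Icc a b)) (hy : ∀ i ∈ Set.Icc a b, 0 ≤ y i)
    (hjstar : jstar ∈ Set.Icc a b) (hIco : ∑ i ∈ Finset.Ico a jstar, y i ≤ 1)
    (hIcc : 1 ≤ ∑ i ∈ Finset.Icc a jstar, y i) (hj : j ∈ Set.Icc a b) :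
    d j - ∑ i ∈ Finset.Ico a j, (d j - d i) * y i
      ≤ d jstar - ∑ i ∈ Finset.Ico a jstar, (d jstar - d i) * y i := by
  change cutRhs d y (Finset.Ico a j) (d j) ≤ cutRhs d y (Finset.Ico a jstar) (d jstar)
  have Icc_subset : Finset.Icc a jstar ⊆ Finset.Icc a b := Finset.Icc_subset_Icc_right hjstar.2
  rcases le_total j jstar with hjj | hjj
  · calc cutRhs d y (Finset.Ico a j) (d j)
        ≤ cutRhs d y (Finset.Ico a jstar) (d j) :=
          cutRhs_Ico_le hd hy hj (Finset.Ico_subset_Icc_self.trans Icc_subset)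
      _ ≤ cutRhs d y (Finset.Ico a jstar) (d jstar) := monotone_cutRhs hIco (hd hj hjstar hjj)
  · calc cutRhs d y (Finset.Ico a j) (d j)
        ≤ cutRhs d y (Finset.Icc a jstar) (d j) := cutRhs_Ico_le hd hy hj Icc_subset
      _ ≤ cutRhs d y (Finset.Icc a jstar) (d jstar) := antitone_cutRhs hIcc (hd hjstar hj hjj)
      _ = cutRhs d y (Finset.Ico a jstar) (d jstar) := by
          rw [← Finset.Ico_insert_right hjstar.1, cutRhs_insert_self]

end CutRhs

/-- Critical facility yields the maximum violation: with facilities `1, …, n` sorted by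
nondecreasing distance, fractional `y ∈ [0,1]` of total mass at least `1`, and `j*` the
smallest index whose prefix sum of `y` reaches `1`, the candidate right-hand side
`f j = d j − Σ_{j' < j} (d j − d j') y j'` is maximized at `j = j*`. -/
theorem critical_facility_max_violation
    (n : ℕ) (d y : ℕ → ℝ)
    (hd : ∀ j j', 1 ≤ j → j ≤ j' → j' ≤ n → d j ≤ d j')
    (hy0 : ∀ j, 1 ≤ j → j ≤ n → 0 ≤ y j)
    (hy1 : ∀ j, 1 ≤ j → j ≤ n → y j ≤ 1)
    (hsum : 1 ≤ ∑ j ∈ Finset.Icc 1 n, y j)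
    (jstar : ℕ) (hj1 : 1 ≤ jstar) (hjn : jstar ≤ n)
    (hge : 1 ≤ ∑ j' ∈ Finset.Icc 1 jstar, y j')
    (hmin : ∀ m, m < jstar → ∑ j' ∈ Finset.Icc 1 m, y j' < 1) :
    ∀ j, 1 ≤ j → j ≤ n →
      d j - ∑ j' ∈ Finset.Icc 1 (j - 1), (d j - d j') * y j'
        ≤ d jstar - ∑ j' ∈ Finset.Icc 1 (jstar - 1), (d jstar - d j') * y j' := by
  intro j h1j hjn'
  have Icc_pred {m : ℕ} (hm : 1 ≤ m) : Finset.Icc 1 (m - 1) = Finset.Ico 1 m :=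
    Finset.Icc_sub_one_right_eq_Ico_of_not_isMin (not_isMin_of_lt hm) 1
  rw [Icc_pred h1j, Icc_pred hj1]
  exact critical_facility_max_violation_general (fun i hi k hk hik ↦ hd i k hi.1 hik hk.2)
    (fun i hi ↦ hy0 i hi.1 hi.2) ⟨hj1, hjn⟩
    (Icc_pred hj1 ▸ (hmin (jstar - 1) (Nat.sub_one_lt_of_lt hj1)).le) hge ⟨h1j, hjn'⟩
end
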